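/- arXiv:solv-int/9905001 — 2 statements merged into one kernel-verified Lean document; each statement's English description precedes it below -/
import Mathlib

section
/- Let u : ℝ → ℝ be smooth and let L be the operator on smooth functions f : ℝ → ℝ given by (Lf)(x) = f''(x) + u(x)·f(x). For a nonnegative integer m define the operator X_m on smooth functions by (X_m f)(x) = (−1)^m · Σ_{k=0}^{m} (−1)^k · C(m, k) · (L^k g_k)(x), where g_k denotes the 2(m−k)-th derivative of f and C(m, k) is a binomial coefficient. Then X_m is a differential operator of order at most m, in the following sense: for any point x₀ ∈ ℝ and any two smooth functions f, g : ℝ → ℝ whose derivatives of all orders i with 0 ≤ i ≤ m agree at x₀, one has (X_m f)(x₀) = (X_m g)(x₀). -/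
open Finset

/-!
With `P = L` and `Q = d²/dx²`, the sum defining `X_m` is, up to the sign `(-1)^m`, the binomial
expansion of `(T ↦ T * Q - P * T)^m` applied to the identity, since left and right multiplications
commute. Filter the operators by their order as polynomials in a derivation `D` with coefficients
on the left: the filtration is multiplicative, and commuting with `D` does not raise the order, so
commuting with `D ^ (r + 1)` raises it by at most `r`. If `Q = D ^ (r + 1)` and `P = Q + W` with `W`
of order at most `r`, then `T * Q - P * T = -(Q * T - T * Q) - W * T`, so each of the `m` steps
raises the order by at most `r` instead of `r + 1`; for `L` this is the case `r = 1`.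
-/

open scoped ContDiff

section AgmonKannaiCoeff

variable {R : Type*} [Ring R]

/-- The Agmon–Kannai coefficient `∑ k ≤ m, (-1)^k C(m,k) P^k Q^(m-k)` of elements `P` and `Q` of a
ring; the operator `X_m` is its value at `P = H` and `Q = H₀`, hence `(-1)^m` times its value at
`P = L` and `Q = d²/dx²`. -/
def agmonKannaiCoeff (P Q : R) (m : ℕ) : R :=
  ∑ k ∈ range (m + 1), ((-1) ^ k * m.choose k : ℤ) • (P ^ k * Q ^ (m - k))

theorem agmonKannaiCoeff_zero (P Q : R) : agmonKannaiCoeff P Q 0 = 1 := by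
  simp [agmonKannaiCoeff]

theorem agmonKannaiCoeff_eq_pow_apply_one (P Q : R) (m : ℕ) :
    agmonKannaiCoeff P Q m = ((LinearMap.mulLeft ℤ (-P) + LinearMap.mulRight ℤ Q) ^ m) 1 := by
  rw [(LinearMap.commute_mulLeft_right (-P) Q).add_pow, LinearMap.sum_apply, agmonKannaiCoeff]
  refine sum_congr rfl fun k _ ↦ ?_
  rw [Module.End.mul_apply, Module.End.mul_apply, Module.End.natCast_apply,
    LinearMap.pow_mulLeft, LinearMap.pow_mulRight, LinearMap.mulLeft_apply,
    LinearMap.mulRight_apply, smul_one_mul, mul_smul_comm, neg_pow P,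
    mul_comm, mul_smul, natCast_zsmul]
  simp [mul_assoc]

theorem agmonKannaiCoeff_succ (P Q : R) (m : ℕ) :
    agmonKannaiCoeff P Q (m + 1) = agmonKannaiCoeff P Q m * Q - P * agmonKannaiCoeff P Q m := by
  simp only [agmonKannaiCoeff_eq_pow_apply_one, pow_succ', Module.End.mul_apply,
    LinearMap.add_apply, LinearMap.mulLeft_apply, LinearMap.mulRight_apply]
  noncomm_ring

end AgmonKannaiCoeff

/-- The operators `∑ i ≤ n, a i • D ^ i` of order at most `n` in a fixed operator `D`, the
coefficients `a i : A` acting by multiplication on the left. -/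
def diffOpOfOrderLE {R A : Type*} [CommSemiring R] [Ring A] [Algebra R A] (D : Module.End R A)
    (n : ℕ) : Submodule A (Module.End R A) :=
  Submodule.span A ((D ^ ·) '' Set.Iic n)

namespace diffOpOfOrderLE

variable {R A : Type*} [CommSemiring R] [Ring A] [Algebra R A] {D S T : Module.End R A} {n r : ℕ}

theorem pow_mem {i : ℕ} (hi : i ≤ n) : D ^ i ∈ diffOpOfOrderLE D n :=
  Submodule.subset_span ⟨i, hi, rfl⟩

protected theorem mono : Monotone (diffOpOfOrderLE D) :=
  fun _ _ h ↦ Submodule.span_mono (Set.image_mono (Set.Iic_subset_Iic.2 h))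

theorem map_apply_eq {B : Type*} [Semiring B] (φ : A →+* B) {f g : A}
    (hT : T ∈ diffOpOfOrderLE D n) (h : ∀ i ≤ n, φ ((D ^ i) f) = φ ((D ^ i) g)) :
    φ (T f) = φ (T g) := by
  induction hT using Submodule.span_induction with
  | mem _ hT =>
    obtain ⟨i, hi, rfl⟩ := hT
    exact h i hi
  | zero => rfl
  | add S T _ _ hS hT => simp only [LinearMap.add_apply, map_add, hS, hT]
  | smul a T _ hT => simp only [LinearMap.smul_apply, smul_eq_mul, map_mul, hT]

theorem mul_self_mem (hT : T ∈ diffOpOfOrderLE D n) : T * D ∈ diffOpOfOrderLE D (n + 1) := by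
  induction hT using Submodule.span_induction with
  | mem _ hT =>
    obtain ⟨i, hi, rfl⟩ := hT
    exact pow_succ D i ▸ pow_mem (Nat.succ_le_succ hi)
  | zero => simp only [zero_mul, zero_mem]
  | add S T _ _ hS hT => exact add_mul S T D ▸ add_mem hS hT
  | smul a T _ hT => exact Submodule.smul_mem _ a hT

theorem mul_pow_mem (hT : T ∈ diffOpOfOrderLE D n) (k : ℕ) :
    T * D ^ k ∈ diffOpOfOrderLE D (n + k) := by
  induction k with
  | zero => simpa using hT
  | succ k ih =>
    rw [pow_succ, ← mul_assoc]
    exact mul_self_mem ih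

section Leibniz

variable (hD : ∀ a b, D (a * b) = D a * b + a * D b)
include hD

theorem commutator_self_mem (hT : T ∈ diffOpOfOrderLE D n) :
    D * T - T * D ∈ diffOpOfOrderLE D n := by
  induction hT using Submodule.span_induction with
  | mem _ hT =>
    obtain ⟨i, -, rfl⟩ := hT
    simp only [← pow_succ, ← pow_succ', sub_self, zero_mem]
  | zero => simp only [mul_zero, zero_mul, sub_self, zero_mem]
  | add S T _ _ hS hT =>
    rw [mul_add, add_mul, add_sub_add_comm]
    exact add_mem hS hT
  | smul a T haT hT =>
    have commutator_smul : D * (a • T) - a • T * D = D a • T + a • (D * T - T * D) := by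
      ext f
      simp [hD, mul_sub, add_sub_assoc]
    rw [commutator_smul]
    exact add_mem (Submodule.smul_mem _ _ haT) (Submodule.smul_mem _ _ hT)

theorem self_mul_mem (hT : T ∈ diffOpOfOrderLE D n) : D * T ∈ diffOpOfOrderLE D (n + 1) := by
  rw [← sub_add_cancel (D * T) (T * D)]
  exact add_mem (diffOpOfOrderLE.mono n.le_succ (commutator_self_mem hD hT)) (mul_self_mem hT)

theorem pow_mul_mem (hT : T ∈ diffOpOfOrderLE D n) (k : ℕ) :
    D ^ k * T ∈ diffOpOfOrderLE D (n + k) := by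
  induction k with
  | zero => simpa using hT
  | succ k ih =>
    rw [pow_succ', mul_assoc]
    exact self_mul_mem hD ih

theorem mul_mem (hS : S ∈ diffOpOfOrderLE D r) (hT : T ∈ diffOpOfOrderLE D n) :
    S * T ∈ diffOpOfOrderLE D (n + r) := by
  induction hS using Submodule.span_induction with
  | mem _ hS =>
    obtain ⟨i, hi, rfl⟩ := hS
    exact diffOpOfOrderLE.mono (Nat.add_le_add_left hi n) (pow_mul_mem hD hT i)
  | zero => simp only [zero_mul, zero_mem]
  | add S S' _ _ hS hS' => exact add_mul S S' T ▸ add_mem hS hS'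
  | smul a S _ hS => exact Submodule.smul_mem _ a hS

theorem commutator_pow_succ_mem (hT : T ∈ diffOpOfOrderLE D n) (r : ℕ) :
    D ^ (r + 1) * T - T * D ^ (r + 1) ∈ diffOpOfOrderLE D (n + r) := by
  induction r with
  | zero => simpa using commutator_self_mem hD hT
  | succ r ih =>
    have commutator_mul : D ^ (r + 2) * T - T * D ^ (r + 2) =
        D * (D ^ (r + 1) * T - T * D ^ (r + 1)) + (D * T - T * D) * D ^ (r + 1) := by
      simp only [pow_succ' D (r + 1), mul_sub, sub_mul, mul_assoc, sub_add_sub_cancel]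
    rw [commutator_mul]
    exact add_mem (self_mul_mem hD ih) (mul_pow_mem (commutator_self_mem hD hT) (r + 1))

theorem agmonKannaiCoeff_mem {W : Module.End R A} (hW : W ∈ diffOpOfOrderLE D r) (m : ℕ) :
    agmonKannaiCoeff (D ^ (r + 1) + W) (D ^ (r + 1)) m ∈ diffOpOfOrderLE D (m * r) := by
  induction m with
  | zero =>
    rw [agmonKannaiCoeff_zero, ← pow_zero D]
    exact pow_mem (Nat.zero_le _)
  | succ m ih =>
    rw [agmonKannaiCoeff_succ, Nat.succ_mul, add_mul (D ^ (r + 1)) W, ← sub_sub,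
      ← neg_sub (D ^ (r + 1) * _)]
    exact sub_mem (neg_mem (commutator_pow_succ_mem hD ih r)) (mul_mem hD hW ih)

end Leibniz

end diffOpOfOrderLE

section SmoothFunctions

variable (𝕜 𝔸 : Type*) [NontriviallyNormedField 𝕜] [NormedRing 𝔸] [NormedAlgebra 𝕜 𝔸]

/-- The algebra of smooth functions `𝕜 → 𝔸` under pointwise operations, on which differentiation is
an everywhere defined linear operator. -/
def smoothFunctions : Subalgebra 𝕜 (𝕜 → 𝔸) where
  carrier := {f | ContDiff 𝕜 ∞ f}
  mul_mem' {f g} (hf : ContDiff 𝕜 ∞ f) (hg : ContDiff 𝕜 ∞ g) := hf.mul hg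
  add_mem' {f g} (hf : ContDiff 𝕜 ∞ f) (hg : ContDiff 𝕜 ∞ g) := hf.add hg
  algebraMap_mem' c := show ContDiff 𝕜 ∞ fun _ ↦ algebraMap 𝕜 𝔸 c from contDiff_const

namespace smoothFunctions

variable {𝕜 𝔸}

theorem contDiff (f : smoothFunctions 𝕜 𝔸) : ContDiff 𝕜 ∞ (f : 𝕜 → 𝔸) := f.2

theorem differentiable (f : smoothFunctions 𝕜 𝔸) : Differentiable 𝕜 (f : 𝕜 → 𝔸) :=
  (contDiff_infty_iff_deriv.1 (contDiff f)).1

/-- Differentiation, as an endomorphism of the space of smooth functions. -/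
noncomputable def derivEnd : Module.End 𝕜 (smoothFunctions 𝕜 𝔸) where
  toFun f := ⟨deriv f, (contDiff_infty_iff_deriv.1 (contDiff f)).2⟩
  map_add' f g := by
    ext x
    exact deriv_add (differentiable f x) (differentiable g x)
  map_smul' c f := by
    ext x
    exact deriv_const_smul c (differentiable f x)

theorem derivEnd_mul (f g : smoothFunctions 𝕜 𝔸) :
    derivEnd (f * g) = derivEnd f * g + f * derivEnd g := by
  ext x
  exact deriv_mul (differentiable f x) (differentiable g x)

theorem coe_derivEnd_pow_apply (n : ℕ) (f : smoothFunctions 𝕜 𝔸) :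
    ((derivEnd ^ n) f : 𝕜 → 𝔸) = iteratedDeriv n (f : 𝕜 → 𝔸) := by
  have hsemiconj : Function.Semiconj ((↑) : smoothFunctions 𝕜 𝔸 → 𝕜 → 𝔸) derivEnd deriv :=
    fun _ ↦ rfl
  rw [Module.End.pow_apply, iteratedDeriv_eq_iterate, (hsemiconj.iterate_right n).eq]

theorem coe_agmonKannaiCoeff_apply {P : Module.End 𝕜 (smoothFunctions 𝕜 𝔸)}
    {L : (𝕜 → 𝔸) → (𝕜 → 𝔸)} (hPL : Function.Semiconj ((↑) : smoothFunctions 𝕜 𝔸 → 𝕜 → 𝔸) P L)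
    (n m : ℕ) (f : smoothFunctions 𝕜 𝔸) (x : 𝕜) :
    (agmonKannaiCoeff P (derivEnd ^ n) m f : 𝕜 → 𝔸) x =
      ∑ k ∈ range (m + 1), (-1 : 𝔸) ^ k * (m.choose k : 𝔸) *
        (L^[k] (iteratedDeriv (n * (m - k)) (f : 𝕜 → 𝔸))) x := by
  simp only [agmonKannaiCoeff, LinearMap.sum_apply, AddSubmonoidClass.coe_finsetSum,
    Finset.sum_apply]
  refine sum_congr rfl fun k _ ↦ ?_
  rw [← coe_derivEnd_pow_apply, ← (hPL.iterate_right k).eq, ← Module.End.pow_apply, pow_mul]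
  simp

end smoothFunctions

end SmoothFunctions

open smoothFunctions in
theorem agmonKannai_operator_order_le_general {𝕜 𝔸 : Type*} [NontriviallyNormedField 𝕜]
    [NormedRing 𝔸] [NormedAlgebra 𝕜 𝔸] {r : ℕ} (b : Fin (r + 1) → 𝕜 → 𝔸)
    (hb : ∀ j, ContDiff 𝕜 ∞ (b j)) (L : (𝕜 → 𝔸) → (𝕜 → 𝔸))
    (hL : ∀ f x, L f x = iteratedDeriv (r + 1) f x + ∑ j, b j x * iteratedDeriv j f x)
    (m : ℕ) (X : (𝕜 → 𝔸) → (𝕜 → 𝔸))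
    (hX : ∀ f x, X f x = (-1 : 𝔸) ^ m * ∑ k ∈ range (m + 1), (-1 : 𝔸) ^ k * (m.choose k : 𝔸) *
      (L^[k] (iteratedDeriv ((r + 1) * (m - k)) f)) x)
    (x₀ : 𝕜) (f g : 𝕜 → 𝔸) (hf : ContDiff 𝕜 ∞ f) (hg : ContDiff 𝕜 ∞ g)
    (hfg : ∀ i ≤ m * r, iteratedDeriv i f x₀ = iteratedDeriv i g x₀) :
    X f x₀ = X g x₀ := by
  let W : Module.End 𝕜 (smoothFunctions 𝕜 𝔸) :=
    ∑ j : Fin (r + 1), (⟨b j, hb j⟩ : smoothFunctions 𝕜 𝔸) • derivEnd ^ (j : ℕ)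
  have hW : W ∈ diffOpOfOrderLE derivEnd r := sum_mem fun j _ ↦
    Submodule.smul_mem _ _ (diffOpOfOrderLE.pow_mem j.is_le)
  have hLW : Function.Semiconj ((↑) : smoothFunctions 𝕜 𝔸 → 𝕜 → 𝔸)
      (derivEnd ^ (r + 1) + W : Module.End 𝕜 (smoothFunctions 𝕜 𝔸)) L := fun h ↦ by
    ext x
    simp [hL, W, ← coe_derivEnd_pow_apply]
  let evalAt : smoothFunctions 𝕜 𝔸 →+* 𝔸 :=
    (Pi.evalRingHom (fun _ ↦ 𝔸) x₀).comp (smoothFunctions 𝕜 𝔸).subtype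
  rw [hX, hX, ← coe_agmonKannaiCoeff_apply hLW (r + 1) m ⟨f, hf⟩,
    ← coe_agmonKannaiCoeff_apply hLW (r + 1) m ⟨g, hg⟩]
  refine congrArg _ (diffOpOfOrderLE.map_apply_eq evalAt
    (diffOpOfOrderLE.agmonKannaiCoeff_mem derivEnd_mul hW m) fun i hi ↦ ?_)
  simpa [evalAt, coe_derivEnd_pow_apply] using hfg i hi

/-- The Agmon–Kannai coefficient operators
`X_m = Σ_{k=0}^m (−1)^k C(m,k) H^k H₀^{m−k}` (with `H = −L`, `H₀ = −d²/dx²`),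
i.e. `(X_m f)(x) = (−1)^m Σ_{k=0}^m (−1)^k C(m,k) (L^k f^(2(m−k)))(x)`,
are differential operators of order at most `m`: if all derivatives of `f` and `g`
of order `≤ m` agree at `x₀`, then `(X_m f)(x₀) = (X_m g)(x₀)`. -/
theorem agmonKannai_operator_order_le (u : ℝ → ℝ) (hu : ContDiff ℝ (⊤ : ℕ∞) u)
    (L : (ℝ → ℝ) → (ℝ → ℝ))
    (hL : ∀ f x, L f x = iteratedDeriv 2 f x + u x * f x)
    (m : ℕ) (X : (ℝ → ℝ) → (ℝ → ℝ))
    (hX : ∀ f x, X f x = (-1 : ℝ) ^ m * ∑ k ∈ Finset.range (m + 1),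
        (-1 : ℝ) ^ k * (m.choose k : ℝ) * (L^[k] (iteratedDeriv (2 * (m - k)) f)) x)
    (x₀ : ℝ) (f g : ℝ → ℝ)
    (hf : ContDiff ℝ (⊤ : ℕ∞) f) (hg : ContDiff ℝ (⊤ : ℕ∞) g)
    (hfg : ∀ i ≤ m, iteratedDeriv i f x₀ = iteratedDeriv i g x₀) :
    X f x₀ = X g x₀ :=
  agmonKannai_operator_order_le_general (r := 1) ![u, 0]
    (Fin.forall_fin_two.2 ⟨hu, contDiff_zero_fun⟩) L (by simpa [Fin.sum_univ_two] using hL) m X hX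
    x₀ f g hf hg (by simpa using hfg)
end

section
/- Let u : ℝ → ℝ be smooth, let L be the operator on smooth functions f : ℝ → ℝ given by (Lf)(x) = f''(x) + u(x)·f(x), and for integers k ≥ n ≥ 1 let P_{k,n}(u, x₀) denote the value at x₀ of L^k applied to x ↦ (x − x₀)^(2k−2n). Define G_n(u, x₀) = Σ_{m=n}^{2n} Σ_{k=n}^{m} [ (−1)^(n+k) · C(m,k) · C(m,n) · C(2m,m) / ( 2^(2m−2n+1) · C(2m,2n) · (2k−2n)! ) ] · P_{k,n}(u, x₀). Then for every x₀ ∈ ℝ, G_2(u, x₀) = u''(x₀) + 3·u(x₀)². -/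
open Finset

/-- `P_{k,n}(u, x₀) := (L^k [(· − x₀)^(2k−2n)])(x₀)`, where `L = d²/dx² + u`. -/
noncomputable def Pkn (u : ℝ → ℝ) (k n : ℕ) (x₀ : ℝ) : ℝ :=
  ((fun f : ℝ → ℝ => fun x => iteratedDeriv 2 f x + u x * f x)^[k]
      (fun x => (x - x₀) ^ (2 * k - 2 * n))) x₀

/-- The `n`-th KdV hierarchy polynomial evaluated at `u` and its derivatives at `x₀`,
as given by the closed formula of Theorem 1:
`G_n(u, x₀) = Σ_{m=n}^{2n} Σ_{k=n}^{m} (−1)^(n+k) C(m,k) C(m,n) C(2m,m) /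
(2^(2m−2n+1) C(2m,2n) (2k−2n)!) · P_{k,n}(u, x₀)`. -/
noncomputable def kdvG (u : ℝ → ℝ) (n : ℕ) (x₀ : ℝ) : ℝ :=
  ∑ m ∈ Finset.Icc n (2 * n), ∑ k ∈ Finset.Icc n m,
    ((-1 : ℝ) ^ (n + k) * (m.choose k : ℝ) * (m.choose n : ℝ) *
        ((2 * m).choose m : ℝ)) /
      (2 ^ (2 * m - 2 * n + 1) * ((2 * m).choose (2 * n) : ℝ) *
        ((2 * k - 2 * n).factorial : ℝ)) * Pkn u k n x₀

/-!
By Leibniz, `D^j (L g) = D^(j+2) g + ∑ l, C(j, l) u⁽ˡ⁾ D^(j-l) g`, so an application of `L` lowers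
the order of vanishing at `x₀` by at most two. If `f` vanishes to order `m` at `x₀`, then
`D^j (L^i f) (x₀)` is governed by the excess `j + 2i - m`: while the excess is at most one `u`
cannot contribute, in excess two it enters at most once, undifferentiated, and in excess four `u'`
meets only `D^(m+1) f` while `u''` and `u²` meet only `D^m f`. For `f = (· - x₀)^(2k-4)`, `i = k`
and `j = 0` the excess is four and `m = 2k-4` is the only order with `D^m f (x₀) ≠ 0`, whence

`P_{k,2} = (2k-4)! (∑_{a < k} C(2a, 2) u'' + C(k, 2) u²)`,

and the finite sum defining `G_2` is arithmetic.
-/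

lemma contDiffAt_iteratedDeriv {𝕜 F : Type*} [NontriviallyNormedField 𝕜] [NormedAddCommGroup F]
    [NormedSpace 𝕜 F] {f : 𝕜 → F} {x : 𝕜} {n p : ℕ} (hf : ContDiffAt 𝕜 (n + p : ℕ) f x) :
    ContDiffAt 𝕜 n (iteratedDeriv p f) x := by
  induction p generalizing f with
  | zero => simpa using hf
  | succ p ih =>
    rw [iteratedDeriv_succ']
    exact ih (hf.derivWithin (by norm_cast))

/-- The one-dimensional Schrödinger operator `L = d²/dx² + u` with potential `u`, whose iterates are
applied to monomials in `Pkn`. -/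
noncomputable def schrodinger {𝕜 : Type*} [NontriviallyNormedField 𝕜] (u f : 𝕜 → 𝕜) : 𝕜 → 𝕜 :=
  fun x ↦ iteratedDeriv 2 f x + u x * f x

section Schrodinger

variable {𝕜 : Type*} [NontriviallyNormedField 𝕜] {u f : 𝕜 → 𝕜} {x : 𝕜} {i j m n r : ℕ}

lemma contDiffAt_schrodinger (hu : ContDiffAt 𝕜 n u x) (hf : ContDiffAt 𝕜 (n + 2 : ℕ) f x) :
    ContDiffAt 𝕜 n (schrodinger u f) x :=
  (contDiffAt_iteratedDeriv hf).add (hu.mul (hf.of_le (mod_cast n.le_add_right 2)))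

lemma contDiffAt_iterate_schrodinger (hu : ContDiffAt 𝕜 r u x)
    (hf : ContDiffAt 𝕜 (r + 2 : ℕ) f x) (hr : n + 2 * i ≤ r + 2) :
    ContDiffAt 𝕜 n ((schrodinger u)^[i] f) x := by
  induction i generalizing n with
  | zero => exact hf.of_le (mod_cast hr)
  | succ i ih =>
    rw [Function.iterate_succ_apply']
    exact contDiffAt_schrodinger (hu.of_le (mod_cast (by omega))) (ih (by omega))

lemma iteratedDeriv_schrodinger (hu : ContDiffAt 𝕜 j u x) (hf : ContDiffAt 𝕜 (j + 2 : ℕ) f x) :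
    iteratedDeriv j (schrodinger u f) x = iteratedDeriv (j + 2) f x +
      ∑ l ∈ range (j + 1), j.choose l * iteratedDeriv l u x * iteratedDeriv (j - l) f x := by
  have hf' : ContDiffAt 𝕜 j f x := hf.of_le (mod_cast j.le_add_right 2)
  unfold schrodinger
  rw [iteratedDeriv_fun_add (contDiffAt_iteratedDeriv hf) (hu.mul hf'),
    iteratedDeriv_fun_mul hu hf']
  simp only [iteratedDeriv_eq_iterate, Function.iterate_add_apply]

lemma iteratedDeriv_schrodinger_eq_sum_range (hu : ContDiffAt 𝕜 j u x)
    (hf : ContDiffAt 𝕜 (j + 2 : ℕ) f x)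
    (hn : ∀ l, n ≤ l → l ≤ j → iteratedDeriv (j - l) f x = 0) :
    iteratedDeriv j (schrodinger u f) x = iteratedDeriv (j + 2) f x +
      ∑ l ∈ range n, j.choose l * iteratedDeriv l u x * iteratedDeriv (j - l) f x := by
  rw [iteratedDeriv_schrodinger hu hf]
  congr 1
  refine sum_congr_of_eq_on_inter (fun l hlj hln ↦ ?_) (fun l _ hlj ↦ ?_) (fun _ _ _ ↦ rfl)
  · rw [mem_range] at hlj hln
    rw [hn l (by omega) (by omega), mul_zero]
  · rw [mem_range] at hlj
    simp [Nat.choose_eq_zero_of_lt (show j < l by omega)]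

lemma iteratedDeriv_iterate_succ_schrodinger (hu : ContDiffAt 𝕜 r u x)
    (hf : ContDiffAt 𝕜 (r + 2 : ℕ) f x) (hr : j + 2 * (i + 1) ≤ r + 2)
    (hn : ∀ l, n ≤ l → l ≤ j → iteratedDeriv (j - l) ((schrodinger u)^[i] f) x = 0) :
    iteratedDeriv j ((schrodinger u)^[i + 1] f) x =
      iteratedDeriv (j + 2) ((schrodinger u)^[i] f) x + ∑ l ∈ range n,
        j.choose l * iteratedDeriv l u x * iteratedDeriv (j - l) ((schrodinger u)^[i] f) x := by
  rw [Function.iterate_succ_apply']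
  exact iteratedDeriv_schrodinger_eq_sum_range (hu.of_le (mod_cast (by omega)))
    (contDiffAt_iterate_schrodinger hu hf (by omega)) hn

lemma iteratedDeriv_iterate_schrodinger_of_le (hu : ContDiffAt 𝕜 r u x)
    (hf : ContDiffAt 𝕜 (r + 2 : ℕ) f x) (hm : ∀ l < m, iteratedDeriv l f x = 0)
    (hr : j + 2 * i ≤ r + 2) (hj : j + 2 * i ≤ m + 1) :
    iteratedDeriv j ((schrodinger u)^[i] f) x = iteratedDeriv (j + 2 * i) f x := by
  induction i generalizing j with
  | zero => rfl
  | succ i ih =>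
    have vanish : ∀ l, 0 ≤ l → l ≤ j →
        iteratedDeriv (j - l) ((schrodinger u)^[i] f) x = 0 := fun l _ _ ↦ by
      rw [ih (by omega) (by omega), hm _ (by omega)]
    rw [iteratedDeriv_iterate_succ_schrodinger hu hf hr vanish, sum_range_zero, add_zero,
      ih (by omega) (by omega)]
    congr 1
    omega

lemma iteratedDeriv_iterate_schrodinger_of_eq_add_two (hu : ContDiffAt 𝕜 r u x)
    (hf : ContDiffAt 𝕜 (r + 2 : ℕ) f x) (hm : ∀ l < m, iteratedDeriv l f x = 0)
    (hr : m ≤ r) (hj : j + 2 * i = m + 2) :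
    iteratedDeriv j ((schrodinger u)^[i] f) x =
      iteratedDeriv (m + 2) f x + i * u x * iteratedDeriv m f x := by
  induction i generalizing j with
  | zero => simp [← hj]
  | succ i ih =>
    have low {l : ℕ} (hl : l + 2 * i ≤ m) :=
      iteratedDeriv_iterate_schrodinger_of_le (j := l) (i := i) hu hf hm (by omega) (by omega)
    have vanish : ∀ l, 1 ≤ l → l ≤ j →
        iteratedDeriv (j - l) ((schrodinger u)^[i] f) x = 0 := fun l _ _ ↦ by
      rw [low (by omega), hm _ (by omega)]
    have lowest : iteratedDeriv j ((schrodinger u)^[i] f) x = iteratedDeriv m f x := by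
      rw [low (by omega), show j + 2 * i = m by omega]
    rw [iteratedDeriv_iterate_succ_schrodinger hu hf (by omega) vanish, ih (by omega),
      sum_range_one, Nat.choose_zero_right, iteratedDeriv_zero, Nat.sub_zero, lowest]
    push_cast
    ring

lemma iteratedDeriv_iterate_schrodinger_of_eq_add_four (hu : ContDiffAt 𝕜 r u x)
    (hf : ContDiffAt 𝕜 (r + 2 : ℕ) f x) (hm : ∀ l < m, iteratedDeriv l f x = 0)
    (hm' : iteratedDeriv (m + 1) f x = 0) (hr : m + 2 ≤ r) (hj : j + 2 * i = m + 4) :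
    iteratedDeriv j ((schrodinger u)^[i] f) x =
      iteratedDeriv (m + 4) f x + i * u x * iteratedDeriv (m + 2) f x +
        ((∑ a ∈ range i, ((j + 2 * a).choose 2 : 𝕜)) * iteratedDeriv 2 u x +
          i.choose 2 * u x ^ 2) * iteratedDeriv m f x := by
  induction i generalizing j with
  | zero => simp [← hj]
  | succ i ih =>
    have low {l : ℕ} (hl : l + 2 * i ≤ m + 1) :=
      iteratedDeriv_iterate_schrodinger_of_le (j := l) (i := i) hu hf hm (by omega) hl
    have vanish : ∀ l, 3 ≤ l → l ≤ j →
        iteratedDeriv (j - l) ((schrodinger u)^[i] f) x = 0 := fun l _ _ ↦ by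
      rw [low (by omega), hm _ (by omega)]
    have potential_term := iteratedDeriv_iterate_schrodinger_of_eq_add_two (j := j) (i := i)
      hu hf hm (by omega) (by omega)
    have first_deriv_term :
        (j.choose 1 : 𝕜) * iteratedDeriv (j - 1) ((schrodinger u)^[i] f) x = 0 := by
      rcases j.eq_zero_or_pos with rfl | hj_pos
      · simp
      · rw [low (by omega), show j - 1 + 2 * i = m + 1 by omega, hm', mul_zero]
    have second_deriv_term :
        (j.choose 2 : 𝕜) * iteratedDeriv (j - 2) ((schrodinger u)^[i] f) x =
          j.choose 2 * iteratedDeriv m f x := by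
      rcases lt_or_ge j 2 with hj_lt | hj_ge
      · simp [Nat.choose_eq_zero_of_lt hj_lt]
      · rw [low (by omega), show j - 2 + 2 * i = m by omega]
    have coeff : ∑ a ∈ range (i + 1), ((j + 2 * a).choose 2 : 𝕜) =
        ∑ a ∈ range i, ((j + 2 + 2 * a).choose 2 : 𝕜) + j.choose 2 := by
      simp only [sum_range_succ', mul_add_one, mul_zero, add_zero, add_assoc, add_comm 2]
    have pairs : ((i + 1).choose 2 : 𝕜) = i + i.choose 2 := by
      rw [Nat.choose_succ_succ', Nat.choose_one_right, Nat.cast_add]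
    rw [iteratedDeriv_iterate_succ_schrodinger hu hf (by omega) vanish, ih (by omega), coeff,
      pairs]
    simp only [sum_range_succ, sum_range_zero, Nat.choose_zero_right, iteratedDeriv_zero,
      Nat.sub_zero, potential_term]
    push_cast
    linear_combination iteratedDeriv 1 u x * first_deriv_term +
      iteratedDeriv 2 u x * second_deriv_term

lemma iteratedDeriv_sub_pow_self (x : 𝕜) (j m : ℕ) :
    iteratedDeriv j (fun y ↦ (y - x) ^ m) x = if j = m then (m.factorial : 𝕜) else 0 := by
  simp only [iteratedDeriv_comp_sub_const j (· ^ m), sub_self, iteratedDeriv_fun_pow_zero,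
    Nat.cast_ite, Nat.cast_zero]

lemma iterate_schrodinger_sub_pow {d : ℕ} (hu : ContDiffAt 𝕜 (2 * d + 2 : ℕ) u x) :
    (schrodinger u)^[d + 2] (fun y ↦ (y - x) ^ (2 * d)) x =
      (2 * d).factorial * ((∑ a ∈ range (d + 2), ((2 * a).choose 2 : 𝕜)) * iteratedDeriv 2 u x +
        (d + 2).choose 2 * u x ^ 2) := by
  have jet (j : ℕ) := iteratedDeriv_sub_pow_self x j (2 * d)
  have smooth : ContDiffAt 𝕜 (2 * d + 2 + 2 : ℕ) (fun y ↦ (y - x) ^ (2 * d)) x := by fun_prop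
  have expansion := iteratedDeriv_iterate_schrodinger_of_eq_add_four (j := 0) (i := d + 2) hu
    smooth (fun l hl ↦ by rw [jet, if_neg hl.ne]) (by simp [jet]) le_rfl (by ring)
  simp only [jet, iteratedDeriv_zero, if_true, zero_add, show 2 * d + 4 ≠ 2 * d by omega,
    show 2 * d + 2 ≠ 2 * d by omega, if_false, mul_zero] at expansion
  rw [expansion, mul_comm]

end Schrodinger

lemma Pkn_add_two_two {u : ℝ → ℝ} {x₀ : ℝ} {d : ℕ} (hu : ContDiffAt ℝ (2 * d + 2 : ℕ) u x₀) :
    Pkn u (d + 2) 2 x₀ =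
      (2 * d).factorial * ((∑ a ∈ range (d + 2), ((2 * a).choose 2 : ℝ)) * iteratedDeriv 2 u x₀ +
        (d + 2).choose 2 * u x₀ ^ 2) :=
  iterate_schrodinger_sub_pow hu

lemma kdvG_two_eq_Pkn (u : ℝ → ℝ) (x₀ : ℝ) :
    kdvG u 2 x₀ = 45 / 8 * Pkn u 2 2 x₀ - 5 / 8 * Pkn u 3 2 x₀ + 1 / 128 * Pkn u 4 2 x₀ := by
  have m_range : Icc 2 (2 * 2) = {2, 3, 4} := by decide
  have k_range₃ : Icc 2 3 = {2, 3} := by decide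
  have k_range₄ : Icc 2 4 = {2, 3, 4} := by decide
  calc kdvG u 2 x₀
    _ = 3 * Pkn u 2 2 x₀ + ((3 / 2 * Pkn u 2 2 x₀ - 1 / 4 * Pkn u 3 2 x₀) +
          (9 / 8 * Pkn u 2 2 x₀ - 3 / 8 * Pkn u 3 2 x₀ + 1 / 128 * Pkn u 4 2 x₀)) := by
      norm_num [kdvG, m_range, k_range₃, k_range₄, Nat.choose, Nat.factorial, sub_eq_add_neg,
        add_assoc]
    _ = 45 / 8 * Pkn u 2 2 x₀ - 5 / 8 * Pkn u 3 2 x₀ + 1 / 128 * Pkn u 4 2 x₀ := by ring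

theorem kdvG_two_general {u : ℝ → ℝ} {x₀ : ℝ} (hu : ContDiffAt ℝ 6 u x₀) :
    kdvG u 2 x₀ = iteratedDeriv 2 u x₀ + 3 * u x₀ ^ 2 := by
  have P₂ : Pkn u 2 2 x₀ = iteratedDeriv 2 u x₀ + u x₀ ^ 2 := by
    simpa [sum_range_succ] using Pkn_add_two_two (d := 0) (hu.of_le (by norm_num))
  have P₃ : Pkn u 3 2 x₀ = 2 * (7 * iteratedDeriv 2 u x₀ + 3 * u x₀ ^ 2) := by
    rw [Pkn_add_two_two (d := 1) (hu.of_le (by norm_num))]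
    norm_num [sum_range_succ, Nat.choose, Nat.factorial]
  have P₄ : Pkn u 4 2 x₀ = 24 * (22 * iteratedDeriv 2 u x₀ + 6 * u x₀ ^ 2) := by
    rw [Pkn_add_two_two (d := 2) (hu.of_le (by norm_num))]
    norm_num [sum_range_succ, Nat.choose, Nat.factorial]
  rw [kdvG_two_eq_Pkn, P₂, P₃, P₄]
  ring

/-- The second KdV polynomial: `G_2[u] = u'' + 3u²`. -/
theorem kdvG_two (u : ℝ → ℝ) (hu : ContDiff ℝ (⊤ : ℕ∞) u) (x₀ : ℝ) :
    kdvG u 2 x₀ = iteratedDeriv 2 u x₀ + 3 * u x₀ ^ 2 :=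
  kdvG_two_general (hu.contDiffAt.of_le ENat.LEInfty.out)
end
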